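/- Let R be a Gorenstein ring (i.e., R_p is a Gorenstein local ring for every prime p). Let Y and Z be resolving subcategories of mod R with Y ⊆ PD(R) and Z ⊆ MCM(R). Then Y = res(Y ∪ Z) ∩ PD(R) and Z = res(Y ∪ Z) ∩ MCM(R). -/

import Mathlib

universe u

open CategoryTheory

namespace ResolvPaper

variable (R : Type u) [CommRing R]

/-- `IsSES f g` means `0 → A → B → C → 0` is a short exact sequence. -/
def IsSES {R : Type u} [CommRing R] {A B C : Type u} [AddCommGroup A] [Module R A]
    [AddCommGroup B] [Module R B] [AddCommGroup C] [Module R C]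
    (f : A →ₗ[R] B) (g : B →ₗ[R] C) : Prop :=
  Function.Injective f ∧ Function.Surjective g ∧ LinearMap.range f = LinearMap.ker g

/-- A resolving subcategory of `mod R`, viewed as a set of bundled modules
closed under isomorphism, containing the finitely generated projective modules, and closed
under direct summands, extensions and syzygies. -/
structure IsResolving (𝒳 : Set (ModuleCat.{u} R)) : Prop where
  fg : ∀ M ∈ 𝒳, Module.Finite R M
  iso_closed : ∀ M N : ModuleCat.{u} R, Nonempty (M ≃ₗ[R] N) → M ∈ 𝒳 → N ∈ 𝒳
  proj_mem : ∀ M : ModuleCat.{u} R, Module.Finite R M → Module.Projective R M → M ∈ 𝒳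
  summand_closed : ∀ M N : ModuleCat.{u} R, ModuleCat.of R (↥M × ↥N) ∈ 𝒳 → M ∈ 𝒳
  ext_closed : ∀ (A B C : ModuleCat.{u} R) (f : A →ₗ[R] B) (g : B →ₗ[R] C),
    IsSES f g → A ∈ 𝒳 → C ∈ 𝒳 → B ∈ 𝒳
  syzygy_closed : ∀ (K P M : ModuleCat.{u} R) (f : K →ₗ[R] P) (g : P →ₗ[R] M),
    IsSES f g → Module.Finite R K → Module.Finite R P → Module.Projective R P →
    M ∈ 𝒳 → K ∈ 𝒳

/-- The resolving closure: the smallest resolving subcategory containing `S`. -/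
def resClosure (S : Set (ModuleCat.{u} R)) : Set (ModuleCat.{u} R) :=
  ⋂₀ {𝒳 | IsResolving R 𝒳 ∧ S ⊆ 𝒳}

/-- An extension-closed subcategory of `mod R`: closed under isomorphism,
direct summands and extensions. -/
def IsExtClosed (𝒳 : Set (ModuleCat.{u} R)) : Prop :=
  (∀ M N : ModuleCat.{u} R, Nonempty (M ≃ₗ[R] N) → M ∈ 𝒳 → N ∈ 𝒳) ∧
  (∀ M N : ModuleCat.{u} R, ModuleCat.of R (↥M × ↥N) ∈ 𝒳 → M ∈ 𝒳) ∧
  (∀ (A B C : ModuleCat.{u} R) (f : A →ₗ[R] B) (g : B →ₗ[R] C),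
    IsSES f g → A ∈ 𝒳 → C ∈ 𝒳 → B ∈ 𝒳)

/-- The extension closure of a set of modules. -/
def extClosure (S : Set (ModuleCat.{u} R)) : Set (ModuleCat.{u} R) :=
  ⋂₀ {𝒳 | IsExtClosed R 𝒳 ∧ S ⊆ 𝒳}

/-- `add R`: direct summands of finite free modules. -/
def addR : Set (ModuleCat.{u} R) :=
  {M | ∃ (n : ℕ) (N : ModuleCat.{u} R), Nonempty ((↥M × ↥N) ≃ₗ[R] (Fin n → R))}

/-- `pdLE n M` : the projective dimension of `M` is at most `n`. -/
def pdLE : ℕ → ModuleCat.{u} R → Prop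
  | 0, M => Module.Projective R M
  | n+1, M => ∃ (K P : ModuleCat.{u} R) (f : K →ₗ[R] P) (g : P →ₗ[R] M),
      Module.Finite R P ∧ Module.Projective R P ∧ IsSES f g ∧ pdLE n K

/-- The projective dimension, an element of `WithBot ℕ∞`; the zero module
has projective dimension `⊥ = -∞`. -/
noncomputable def pdim (M : ModuleCat.{u} R) : WithBot ℕ∞ :=
  sInf {x : WithBot ℕ∞ | (x = ⊥ ∧ Subsingleton M) ∨ ∃ n : ℕ, x = (n : ℕ∞) ∧ pdLE R n M}

/-- The depth of `M` with respect to the ideal `I`: the supremum of lengths of weakly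
`M`-regular sequences contained in `I`.  The zero module has depth `∞`. -/
noncomputable def depthE (I : Ideal R) (M : Type u) [AddCommGroup M] [Module R M] : ℕ∞ :=
  sSup {x : ℕ∞ | ∃ rs : List R, (∀ r ∈ rs, r ∈ I) ∧
    RingTheory.Sequence.IsWeaklyRegular M rs ∧ x = rs.length}

/-- The grade of an ideal: the length of a maximal `R`-regular sequence in `I`. -/
noncomputable def gradeE (I : Ideal R) : ℕ∞ := depthE R I R

/-- A grade consistent function on `Spec R`. -/
def GradeConsistent (f : PrimeSpectrum R → ℕ) : Prop :=
  (∀ p : PrimeSpectrum R, (f p : ℕ∞) ≤ gradeE R p.asIdeal) ∧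
  (∀ p q : PrimeSpectrum R, p.asIdeal ≤ q.asIdeal → f p ≤ f q)

/-- The localization of a module at a prime, as a module over the local ring `R_p`. -/
noncomputable abbrev localizeM (p : PrimeSpectrum R) (M : ModuleCat.{u} R) :
    ModuleCat.{u} (Localization.AtPrime p.asIdeal) :=
  ModuleCat.of (Localization.AtPrime p.asIdeal) (LocalizedModule p.asIdeal.primeCompl M)

/-- `pd_{R_p} M_p`. -/
noncomputable def localPdim (p : PrimeSpectrum R) (M : ModuleCat.{u} R) : WithBot ℕ∞ :=
  pdim (Localization.AtPrime p.asIdeal) (localizeM R p M)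

/-- `depth_{R_p} M_p`. -/
noncomputable def localDepth (p : PrimeSpectrum R) (M : ModuleCat.{u} R) : ℕ∞ :=
  depthE (Localization.AtPrime p.asIdeal)
    (IsLocalRing.maximalIdeal (Localization.AtPrime p.asIdeal))
    (LocalizedModule p.asIdeal.primeCompl M)

/-- The height of a prime ideal. -/
noncomputable def heightE (p : PrimeSpectrum R) : ℕ∞ := Order.height p

/-- `PD(R)` : finitely generated modules of finite projective dimension. -/
def PDcat : Set (ModuleCat.{u} R) :=
  {M | Module.Finite R M ∧ ∃ n : ℕ, pdLE R n M}

/-- `MCM(R)` : maximal Cohen-Macaulay modules. -/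
def MCMcat : Set (ModuleCat.{u} R) :=
  {M | Module.Finite R M ∧ ∀ p : PrimeSpectrum R, heightE R p ≤ localDepth R p M}

/-- The nonfree locus of a module. -/
def NF (M : ModuleCat.{u} R) : Set (PrimeSpectrum R) :=
  {p | ¬ Module.Free (Localization.AtPrime p.asIdeal) (LocalizedModule p.asIdeal.primeCompl M)}

/-- The infinite projective dimension locus of a module. -/
def IPD (M : ModuleCat.{u} R) : Set (PrimeSpectrum R) :=
  {p | localPdim R p M = (⊤ : WithBot ℕ∞)}

/-- The infinite projective dimension locus of a collection of modules. -/
def IPDcat (𝒳 : Set (ModuleCat.{u} R)) : Set (PrimeSpectrum R) :=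
  ⋃ M ∈ 𝒳, IPD R M

/-- The modules in `mod R` whose infinite projective dimension locus lies in `W`. -/
def IPDinv (W : Set (PrimeSpectrum R)) : Set (ModuleCat.{u} R) :=
  {M | Module.Finite R M ∧ IPD R M ⊆ W}

/-- A specialization closed subset of `Spec R`. -/
def SpecClosed (W : Set (PrimeSpectrum R)) : Prop :=
  ∀ p ∈ W, ∀ q : PrimeSpectrum R, p.asIdeal ≤ q.asIdeal → q ∈ W

/-- Membership in `add 𝒳_p`: direct summands of localizations of finite direct sums
of members of `𝒳`. -/
def memAddLocal (𝒳 : Set (ModuleCat.{u} R)) (p : PrimeSpectrum R)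
    (N : ModuleCat.{u} (Localization.AtPrime p.asIdeal)) : Prop :=
  ∃ (n : ℕ) (X : Fin n → ModuleCat.{u} R), (∀ i, X i ∈ 𝒳) ∧
    ∃ (N' : ModuleCat.{u} (Localization.AtPrime p.asIdeal)),
      Nonempty ((↥N × ↥N') ≃ₗ[Localization.AtPrime p.asIdeal]
        ((i : Fin n) → LocalizedModule p.asIdeal.primeCompl (X i)))

/-- `K` is an `n`-th syzygy of `M` computed from a minimal free resolution over the
local ring `S`. -/
def IsMinSyz (S : Type u) [CommRing S] [IsLocalRing S] :
    ℕ → ModuleCat.{u} S → ModuleCat.{u} S → Prop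
  | 0, M, K => Nonempty (K ≃ₗ[S] M)
  | n+1, M, K => ∃ (F : ModuleCat.{u} S) (g : F →ₗ[S] M) (K' : ModuleCat.{u} S)
      (i : K' →ₗ[S] F),
      Module.Finite S F ∧ Module.Free S F ∧ Function.Surjective g ∧
      (LinearMap.ker g ≤ (IsLocalRing.maximalIdeal S) • (⊤ : Submodule S F)) ∧
      Function.Injective i ∧ LinearMap.range i = LinearMap.ker g ∧
      IsMinSyz S n K' K

/-- `K` is an `n`-th syzygy of `M` in some projective resolution (over any ring). -/
def IsSyz : ℕ → ModuleCat.{u} R → ModuleCat.{u} R → Prop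
  | 0, M, K => Nonempty (K ≃ₗ[R] M)
  | n+1, M, K => ∃ (F : ModuleCat.{u} R) (g : F →ₗ[R] M) (K' : ModuleCat.{u} R)
      (i : K' →ₗ[R] F),
      Module.Finite R F ∧ Module.Projective R F ∧ Function.Surjective g ∧
      Function.Injective i ∧ LinearMap.range i = LinearMap.ker g ∧
      IsSyz n K' K

/-- `T` is (isomorphic to) the Auslander transpose of `M`, computed from a minimal
free presentation over the local ring `S`. -/
def IsTranspose (S : Type u) [CommRing S] [IsLocalRing S] (M T : ModuleCat.{u} S) : Prop :=
  ∃ (F1 F0 : ModuleCat.{u} S) (d : F1 →ₗ[S] F0) (e : F0 →ₗ[S] M),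
    Module.Finite S F0 ∧ Module.Free S F0 ∧ Module.Finite S F1 ∧ Module.Free S F1 ∧
    Function.Surjective e ∧ LinearMap.range d = LinearMap.ker e ∧
    LinearMap.ker e ≤ (IsLocalRing.maximalIdeal S) • (⊤ : Submodule S F0) ∧
    LinearMap.ker d ≤ (IsLocalRing.maximalIdeal S) • (⊤ : Submodule S F1) ∧
    Nonempty (T ≃ₗ[S] ((Module.Dual S F1) ⧸ LinearMap.range d.dualMap))

/-- `T` is (isomorphic to) `Tr Ω^n M` over the local ring `S`. -/
def IsTrOmega (S : Type u) [CommRing S] [IsLocalRing S] (n : ℕ) (M T : ModuleCat.{u} S) :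
    Prop :=
  ∃ K : ModuleCat.{u} S, IsMinSyz S n M K ∧ IsTranspose S K T

/-- Resolving subcategory `𝒳` is dominant on `W ⊆ Spec R`. -/
def DominantOn (𝒳 : Set (ModuleCat.{u} R)) (W : Set (PrimeSpectrum R)) : Prop :=
  ∀ p ∈ W, ∃ (n : ℕ) (K : ModuleCat.{u} (Localization.AtPrime p.asIdeal)),
    IsMinSyz (Localization.AtPrime p.asIdeal) n
      (ModuleCat.of (Localization.AtPrime p.asIdeal)
        (IsLocalRing.ResidueField (Localization.AtPrime p.asIdeal))) K ∧
    memAddLocal R 𝒳 p K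

/-- Dominant resolving subcategory. -/
def Dominant (𝒳 : Set (ModuleCat.{u} R)) : Prop := DominantOn R 𝒳 Set.univ

/-- A (noetherian) local ring is Cohen-Macaulay if its depth equals its Krull dimension. -/
def IsCMLocalRing (S : Type u) [CommRing S] [IsLocalRing S] : Prop :=
  IsNoetherianRing S ∧
    ((depthE S (IsLocalRing.maximalIdeal S) S : WithBot ℕ∞) = ringKrullDim S)

/-- A regular local ring: a noetherian local ring whose maximal ideal is generated by
`dim S` elements. -/
def IsRegLocalRing (S : Type u) [CommRing S] [IsLocalRing S] : Prop :=
  IsNoetherianRing S ∧ ∃ s : Finset S,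
    Ideal.span (s : Set S) = IsLocalRing.maximalIdeal S ∧
    ringKrullDim S = (s.card : WithBot ℕ∞)

/-- The singular locus of `R`. -/
def SingLocus : Set (PrimeSpectrum R) :=
  {p | ¬ IsRegLocalRing (Localization.AtPrime p.asIdeal)}

/-- A hypersurface local ring: the completion is a quotient of a regular local ring by
one element. -/
def IsHypersurfaceLocalRing (S : Type u) [CommRing S] [IsLocalRing S] : Prop :=
  ∃ (T : Type u) (_ : CommRing T) (_ : IsLocalRing T) (f : T),
    IsRegLocalRing T ∧
    Nonempty ((AdicCompletion (IsLocalRing.maximalIdeal S) S) ≃+* (T ⧸ Ideal.span {f}))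

/-- A complete intersection local ring: the completion is a quotient of a regular local
ring by a regular sequence. -/
def IsCompleteIntersectionLocalRing (S : Type u) [CommRing S] [IsLocalRing S] : Prop :=
  ∃ (T : Type u) (_ : CommRing T) (_ : IsLocalRing T) (rs : List T),
    IsRegLocalRing T ∧ RingTheory.Sequence.IsRegular T rs ∧
    Nonempty ((AdicCompletion (IsLocalRing.maximalIdeal S) S) ≃+*
      (T ⧸ Ideal.ofList rs))

/-- The subquotient `A / (A ⊓ B)` of two submodules, used for homology. -/
def subquot {S M : Type u} [CommRing S] [AddCommGroup M] [Module S M]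
    (A B : Submodule S M) : Type u :=
  A ⧸ (B.comap A.subtype)

noncomputable instance {S M : Type u} [CommRing S] [AddCommGroup M] [Module S M]
    (A B : Submodule S M) : AddCommGroup (subquot A B) :=
  inferInstanceAs (AddCommGroup (A ⧸ (B.comap A.subtype)))

noncomputable instance {S M : Type u} [CommRing S] [AddCommGroup M] [Module S M]
    (A B : Submodule S M) : Module S (subquot A B) :=
  inferInstanceAs (Module S (A ⧸ (B.comap A.subtype)))

/-- `E` is (isomorphic to) `Ext^{j+1}_S(M, S)`, computed from a finite free resolution. -/
def IsExtPos (S : Type u) [CommRing S] (j : ℕ) (M E : ModuleCat.{u} S) : Prop :=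
  ∃ (F : ℕ → ModuleCat.{u} S) (d : ∀ i : ℕ, (F (i+1) : Type u) →ₗ[S] F i)
    (e : (F 0 : Type u) →ₗ[S] M),
    (∀ i, Module.Finite S (F i)) ∧ (∀ i, Module.Free S (F i)) ∧
    Function.Surjective e ∧ LinearMap.range (d 0) = LinearMap.ker e ∧
    (∀ i, LinearMap.range (d (i+1)) = LinearMap.ker (d i)) ∧
    Nonempty (E ≃ₗ[S]
      subquot (LinearMap.ker ((d (j+1)).dualMap)) (LinearMap.range ((d j).dualMap)))

/-- `T` is (isomorphic to) `Tor_n^S(M, N)`, computed from a projective resolution of `M`. -/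
def IsTor (S : Type u) [CommRing S] (n : ℕ) (M N T : ModuleCat.{u} S) : Prop :=
  ∃ (F : ℕ → ModuleCat.{u} S) (d : ∀ i : ℕ, (F (i+1) : Type u) →ₗ[S] F i)
    (e : (F 0 : Type u) →ₗ[S] M),
    (∀ i, Module.Projective S (F i)) ∧
    Function.Surjective e ∧ LinearMap.range (d 0) = LinearMap.ker e ∧
    (∀ i, LinearMap.range (d (i+1)) = LinearMap.ker (d i)) ∧
    (match n with
      | 0 => Nonempty (T ≃ₗ[S] TensorProduct S M N)
      | (j+1) => Nonempty (T ≃ₗ[S]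
          subquot (LinearMap.ker (LinearMap.rTensor (↥N) (d j)))
            (LinearMap.range (LinearMap.rTensor (↥N) (d (j+1))))))

/-- `idLE n M` : the injective dimension of `M` is at most `n`. -/
def idLE (S : Type u) [CommRing S] : ℕ → ModuleCat.{u} S → Prop
  | 0, M => Module.Injective S M
  | n+1, M => ∃ (I C : ModuleCat.{u} S) (f : M →ₗ[S] I) (g : I →ₗ[S] C),
      IsSES f g ∧ Module.Injective S I ∧ idLE S n C

/-- `PD_0^n(R)` over a local ring: modules of projective dimension at most `n` that are
free on the punctured spectrum. -/
def PD0n [IsLocalRing R] (n : ℕ) : Set (ModuleCat.{u} R) :=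
  {M | Module.Finite R M ∧ pdLE R n M ∧
    ∀ p : PrimeSpectrum R, p.asIdeal ≠ IsLocalRing.maximalIdeal R →
      Module.Free (Localization.AtPrime p.asIdeal) (LocalizedModule p.asIdeal.primeCompl M)}

/-- `PD_0(R)` over a local ring: modules of finite projective dimension that are
free on the punctured spectrum. -/
def PD0 [IsLocalRing R] : Set (ModuleCat.{u} R) :=
  {M | Module.Finite R M ∧ (∃ n : ℕ, pdLE R n M) ∧
    ∀ p : PrimeSpectrum R, p.asIdeal ≠ IsLocalRing.maximalIdeal R →
      Module.Free (Localization.AtPrime p.asIdeal) (LocalizedModule p.asIdeal.primeCompl M)}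

/-- The residue field of a local ring, as a bundled module. -/
noncomputable abbrev residueMod (S : Type u) [CommRing S] [IsLocalRing S] : ModuleCat.{u} S :=
  ModuleCat.of S (IsLocalRing.ResidueField S)


section ExtInterface

open Abelian

variable {R} {A B C M N : Type u} [AddCommGroup A] [Module R A] [AddCommGroup B] [Module R B]
  [AddCommGroup C] [Module R C] [AddCommGroup M] [Module R M] [AddCommGroup N] [Module R N]

/-- Vanishing of `Ext^i_R(M,N)`. -/
abbrev EV (R : Type u) [CommRing R] (M N : Type u) [AddCommGroup M] [Module R M]
    [AddCommGroup N] [Module R N] (i : ℕ) : Prop :=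
  Subsingleton (Ext (ModuleCat.of R M) (ModuleCat.of R N) i)

theorem IsSES.comp_zero {f : A →ₗ[R] B} {g : B →ₗ[R] C} (h : IsSES f g) (a : A) : g (f a) = 0 := by
  have : f a ∈ LinearMap.ker g := h.2.2 ▸ LinearMap.mem_range_self f a
  simpa using this

theorem IsSES.exists_of {f : A →ₗ[R] B} {g : B →ₗ[R] C} (h : IsSES f g) {b : B} (hb : g b = 0) :
    ∃ a, f a = b := by
  have : b ∈ LinearMap.range f := by rw [h.2.2]; simpa using hb
  simpa using this

theorem IsSES.exact {f : A →ₗ[R] B} {g : B →ₗ[R] C} (h : IsSES f g) : Function.Exact f g :=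
  fun b => ⟨fun hb => h.exists_of hb, fun ⟨a, ha⟩ => ha ▸ h.comp_zero a⟩

theorem IsSES.of_exact {f : A →ₗ[R] B} {g : B →ₗ[R] C} (h1 : Function.Injective f)
    (h2 : Function.Surjective g) (h3 : Function.Exact f g) : IsSES f g :=
  ⟨h1, h2, (LinearMap.exact_iff.mp h3).symm⟩

theorem isSES_ker {g : B →ₗ[R] C} (hg : Function.Surjective g) :
    IsSES (LinearMap.ker g).subtype g :=
  ⟨Subtype.val_injective, hg, by simp⟩

theorem isSES_mkQ (p : Submodule R B) : IsSES p.subtype p.mkQ :=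
  ⟨Subtype.val_injective, Submodule.mkQ_surjective p, by simp⟩

theorem isSES_coker {f : A →ₗ[R] B} (hf : Function.Injective f) :
    IsSES f (LinearMap.range f).mkQ :=
  ⟨hf, Submodule.mkQ_surjective _, by simp⟩

/-- the short complex attached to a short exact sequence -/
abbrev IsSES.sc {f : A →ₗ[R] B} {g : B →ₗ[R] C} (h : IsSES f g) : ShortComplex (ModuleCat.{u} R) :=
  ModuleCat.shortComplexOfCompEqZero f g (LinearMap.ext h.comp_zero)

theorem IsSES.se {f : A →ₗ[R] B} {g : B →ₗ[R] C} (h : IsSES f g) : h.sc.ShortExact where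
  exact := (ShortComplex.ShortExact.moduleCat_exact_iff_function_exact _).mpr h.exact
  mono_f := (ModuleCat.mono_iff_injective _).mpr h.1
  epi_g := (ModuleCat.epi_iff_surjective _).mpr h.2.1

theorem EV.contra_mid {f : A →ₗ[R] B} {g : B →ₗ[R] C} (h : IsSES f g) {i : ℕ}
    (hA : EV R A N i) (hC : EV R C N i) : EV R B N i := by
  refine ⟨fun a b => ?_⟩
  have key : ∀ x : Ext (ModuleCat.of R B) (ModuleCat.of R N) i, x = 0 := fun x => by
    obtain ⟨y, hy⟩ := Ext.contravariant_sequence_exact₂ h.se (ModuleCat.of R N) x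
      (Subsingleton.elim (α := Ext (ModuleCat.of R A) (ModuleCat.of R N) i) _ _)
    rw [← hy, Subsingleton.elim (α := Ext (ModuleCat.of R C) (ModuleCat.of R N) i) y 0]
    simp
  rw [key a, key b]

theorem EV.contra_left {f : A →ₗ[R] B} {g : B →ₗ[R] C} (h : IsSES f g) {i : ℕ}
    (hB : EV R B N i) (hC : EV R C N (i+1)) : EV R A N i := by
  refine ⟨fun a b => ?_⟩
  have key : ∀ x : Ext (ModuleCat.of R A) (ModuleCat.of R N) i, x = 0 := fun x => by
    obtain ⟨y, hy⟩ := Ext.contravariant_sequence_exact₁ h.se (ModuleCat.of R N) x (add_comm 1 i)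
      (Subsingleton.elim (α := Ext (ModuleCat.of R C) (ModuleCat.of R N) (i+1)) _ _)
    rw [← hy, Subsingleton.elim (α := Ext (ModuleCat.of R B) (ModuleCat.of R N) i) y 0]
    simp
  rw [key a, key b]

theorem EV.contra_right {f : A →ₗ[R] B} {g : B →ₗ[R] C} (h : IsSES f g) {i : ℕ}
    (hA : EV R A N i) (hB : EV R B N (i+1)) : EV R C N (i+1) := by
  refine ⟨fun a b => ?_⟩
  have key : ∀ x : Ext (ModuleCat.of R C) (ModuleCat.of R N) (i+1), x = 0 := fun x => by
    obtain ⟨y, hy⟩ := Ext.contravariant_sequence_exact₃ h.se (ModuleCat.of R N) x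
      (Subsingleton.elim (α := Ext (ModuleCat.of R B) (ModuleCat.of R N) (i+1)) _ _) (add_comm 1 i)
    rw [← hy, Subsingleton.elim (α := Ext (ModuleCat.of R A) (ModuleCat.of R N) i) y 0]
    simp
  rw [key a, key b]

theorem EV.co_mid {f : A →ₗ[R] B} {g : B →ₗ[R] C} (h : IsSES f g) {i : ℕ}
    (hA : EV R M A i) (hC : EV R M C i) : EV R M B i := by
  refine ⟨fun a b => ?_⟩
  have key : ∀ x : Ext (ModuleCat.of R M) (ModuleCat.of R B) i, x = 0 := fun x => by
    obtain ⟨y, hy⟩ := Ext.covariant_sequence_exact₂ (ModuleCat.of R M) h.se x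
      (Subsingleton.elim (α := Ext (ModuleCat.of R M) (ModuleCat.of R C) i) _ _)
    rw [← hy, Subsingleton.elim (α := Ext (ModuleCat.of R M) (ModuleCat.of R A) i) y 0]
    simp
  rw [key a, key b]

theorem EV.co_right {f : A →ₗ[R] B} {g : B →ₗ[R] C} (h : IsSES f g) {i : ℕ}
    (hB : EV R M B i) (hA : EV R M A (i+1)) : EV R M C i := by
  refine ⟨fun a b => ?_⟩
  have key : ∀ x : Ext (ModuleCat.of R M) (ModuleCat.of R C) i, x = 0 := fun x => by
    obtain ⟨y, hy⟩ := Ext.covariant_sequence_exact₃ (ModuleCat.of R M) h.se x rfl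
      (Subsingleton.elim (α := Ext (ModuleCat.of R M) (ModuleCat.of R A) (i+1)) _ _)
    rw [← hy, Subsingleton.elim (α := Ext (ModuleCat.of R M) (ModuleCat.of R B) i) y 0]
    simp
  rw [key a, key b]

theorem EV.co_left {f : A →ₗ[R] B} {g : B →ₗ[R] C} (h : IsSES f g) {i : ℕ}
    (hC : EV R M C i) (hB : EV R M B (i+1)) : EV R M A (i+1) := by
  refine ⟨fun a b => ?_⟩
  have key : ∀ x : Ext (ModuleCat.of R M) (ModuleCat.of R A) (i+1), x = 0 := fun x => by
    obtain ⟨y, hy⟩ := Ext.covariant_sequence_exact₁ (ModuleCat.of R M) h.se x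
      (Subsingleton.elim (α := Ext (ModuleCat.of R M) (ModuleCat.of R B) (i+1)) _ _) rfl
    rw [← hy, Subsingleton.elim (α := Ext (ModuleCat.of R M) (ModuleCat.of R C) i) y 0]
    simp
  rw [key a, key b]

theorem EV.lift {f : A →ₗ[R] B} {g : B →ₗ[R] C} (h : IsSES f g)
    (hA : EV R M A 1) (φ : M →ₗ[R] C) : ∃ ψ : M →ₗ[R] B, g ∘ₗ ψ = φ := by
  obtain ⟨y, hy⟩ := Ext.covariant_sequence_exact₃ (ModuleCat.of R M) h.se
    (Ext.mk₀ (ModuleCat.ofHom φ)) rfl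
      (Subsingleton.elim (α := Ext (ModuleCat.of R M) (ModuleCat.of R A) 1) _ _)
  obtain ⟨y, rfl⟩ := (Ext.mk₀_bijective _ _).2 y
  rw [Ext.mk₀_comp_mk₀] at hy
  have := (Ext.mk₀_bijective _ _).1 hy
  exact ⟨y.hom, by simpa using congrArg ModuleCat.Hom.hom this⟩

theorem extend_of_zero {f : A →ₗ[R] B} {g : B →ₗ[R] C} (h : IsSES f g)
    (φ : A →ₗ[R] N) (h0 : h.se.extClass.comp (Ext.mk₀ (ModuleCat.ofHom φ)) (add_zero 1) = 0) :
    ∃ ψ : B →ₗ[R] N, ψ ∘ₗ f = φ := by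
  obtain ⟨y, hy⟩ := Ext.contravariant_sequence_exact₁ h.se (ModuleCat.of R N)
    (Ext.mk₀ (ModuleCat.ofHom φ)) rfl h0
  obtain ⟨y, rfl⟩ := (Ext.mk₀_bijective _ _).2 y
  rw [Ext.mk₀_comp_mk₀] at hy
  have := (Ext.mk₀_bijective _ _).1 hy
  exact ⟨y.hom, by simpa using congrArg ModuleCat.Hom.hom this⟩

theorem EV.extend {f : A →ₗ[R] B} {g : B →ₗ[R] C} (h : IsSES f g)
    (hC : EV R C N 1) (φ : A →ₗ[R] N) : ∃ ψ : B →ₗ[R] N, ψ ∘ₗ f = φ :=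
  extend_of_zero h φ (Subsingleton.elim (α := Ext (ModuleCat.of R C) (ModuleCat.of R N) 1) _ _)

theorem EV.of_projective [Module.Projective R M] (i : ℕ) : EV R M N (i+1) :=
  have : Projective (ModuleCat.of R M) := (IsProjective.iff_projective _).mp ‹_›
  Ext.subsingleton_of_projective _ _ _

theorem EV.of_injective [Module.Injective R N] (i : ℕ) : EV R M N (i+1) :=
  have : Injective (ModuleCat.of R N) := Module.injective_object_of_injective_module R N
  Ext.subsingleton_of_injective _ _ _

/-- every element of Ext^{i+1}(C,N) comes from Ext^i(A,N) when B is projective -/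
theorem ext_of_proj {f : A →ₗ[R] B} {g : B →ₗ[R] C} (h : IsSES f g) [Module.Projective R B]
    {i : ℕ} (e : Ext (ModuleCat.of R C) (ModuleCat.of R N) (i+1)) :
    ∃ e' : Ext (ModuleCat.of R A) (ModuleCat.of R N) i, 
      h.se.extClass.comp e' (add_comm 1 i) = e :=
  Ext.contravariant_sequence_exact₃ h.se (ModuleCat.of R N) e
      ((EV.of_projective (R := R) (M := B) (N := N) i).elim _ _) (add_comm 1 i)

theorem ext_zero_of_extend {f : A →ₗ[R] B} {g : B →ₗ[R] C} (h : IsSES f g)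
    (ψ : B →ₗ[R] N) :
    h.se.extClass.comp (Ext.mk₀ (ModuleCat.ofHom (ψ ∘ₗ f))) (add_zero 1) = 0 := by
  have : ModuleCat.ofHom (ψ ∘ₗ f) = h.sc.f ≫ ModuleCat.ofHom ψ := rfl
  rw [this, ← Ext.mk₀_comp_mk₀]
  exact h.se.extClass_comp_assoc _

theorem EV.of_extend {f : A →ₗ[R] B} {g : B →ₗ[R] C} (h : IsSES f g) [Module.Projective R B]
    (H : ∀ φ : A →ₗ[R] N, ∃ ψ : B →ₗ[R] N, ψ ∘ₗ f = φ) : EV R C N 1 := by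
  have key : ∀ x : Ext (ModuleCat.of R C) (ModuleCat.of R N) 1, x = 0 := fun x => by
    obtain ⟨y, rfl⟩ := ext_of_proj h (i := 0) x
    obtain ⟨y, rfl⟩ := (Ext.mk₀_bijective _ _).2 y
    obtain ⟨ψ, hψ⟩ := H y.hom
    have := ext_zero_of_extend h ψ
    rw [hψ] at this
    exact this
  exact ⟨fun a b => by rw [key a, key b]⟩

theorem EV.retract_right {i : ℕ} (hM : EV R M B i) (s : N →ₗ[R] B) (r : B →ₗ[R] N)
    (hr : r ∘ₗ s = LinearMap.id) : EV R M N i := by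
  have key : ∀ x : Ext (ModuleCat.of R M) (ModuleCat.of R N) i, x = 0 := fun x => by
    have h1 : x.comp (Ext.mk₀ (ModuleCat.ofHom s)) (add_zero i) = 0 := Subsingleton.elim _ _
    have h2 : (x.comp (Ext.mk₀ (ModuleCat.ofHom s)) (add_zero i)).comp
      (Ext.mk₀ (ModuleCat.ofHom r)) (add_zero i) = x := by
      rw [Ext.comp_assoc_of_third_deg_zero, Ext.mk₀_comp_mk₀, ← ModuleCat.ofHom_comp, hr]
      simp
    rw [← h2, h1]; simp
  exact ⟨fun a b => by rw [key a, key b]⟩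

theorem EV.retract_left {i : ℕ} (hM : EV R B N i) (s : M →ₗ[R] B) (r : B →ₗ[R] M)
    (hr : r ∘ₗ s = LinearMap.id) : EV R M N i := by
  have key : ∀ x : Ext (ModuleCat.of R M) (ModuleCat.of R N) i, x = 0 := fun x => by
    have h1 : (Ext.mk₀ (ModuleCat.ofHom r)).comp x (zero_add i) = 0 := Subsingleton.elim _ _
    have h2 : (Ext.mk₀ (ModuleCat.ofHom s)).comp
      ((Ext.mk₀ (ModuleCat.ofHom r)).comp x (zero_add i)) (zero_add i) = x := by
      rw [Ext.mk₀_comp_mk₀_assoc, ← ModuleCat.ofHom_comp, hr]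
      simp
    rw [← h2, h1]; simp
  exact ⟨fun a b => by rw [key a, key b]⟩

theorem EV.congr_left {i : ℕ} (e : M ≃ₗ[R] B) (h : EV R M N i) : EV R B N i :=
  h.retract_left e.symm.toLinearMap e.toLinearMap (by ext; simp)

theorem EV.of_subsingleton_left [Subsingleton M] (i : ℕ) : EV R M N i := by
  have key : ∀ x : Ext (ModuleCat.of R M) (ModuleCat.of R N) i, x = 0 := fun x => by
    rw [← Ext.mk₀_id_comp x]
    have : 𝟙 (ModuleCat.of R M) = 0 := by ext x; exact Subsingleton.elim (α := M) _ _
    rw [this]; simp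
  exact ⟨fun a b => by rw [key a, key b]⟩

/-- Ext^i(M, R^n) -/
theorem EV.pi {i : ℕ} (h : EV R M R i) (n : ℕ) : EV R M (Fin n → R) i := by
  induction n with
  | zero =>
    exact h.retract_right 0 0 (by ext x; exact Fin.elim0 ‹_›)
  | succ n ih =>
    have hs : IsSES (LinearMap.inl R R (Fin n → R)) (LinearMap.snd R R (Fin n → R)) :=
      ⟨LinearMap.inl_injective, LinearMap.snd_surjective, LinearMap.range_inl _ _ _⟩
    have := EV.co_mid hs h ih
    exact this.retract_right (Fin.consLinearEquiv R (fun _ : Fin (n+1) => R)).symm.toLinearMap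
      (Fin.consLinearEquiv R (fun _ : Fin (n+1) => R)).toLinearMap (by ext; simp)

theorem EV.of_fg_projective {i : ℕ} (h : EV R M R i) [Module.Finite R N] [Module.Projective R N] :
    EV R M N i := by
  obtain ⟨n, f, hf⟩ := Module.Finite.exists_fin' R N
  obtain ⟨s, hs⟩ := Module.projective_lifting_property f LinearMap.id hf
  exact (h.pi n).retract_right s f hs

end ExtInterface
section LocalTheory

open Abelian
open scoped Pointwise

variable {S : Type u} [CommRing S]

theorem idLE_EV (n : ℕ) : ∀ (T : ModuleCat.{u} S), idLE S n T → ∀ (M : Type u) [AddCommGroup M]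
    [Module S M] (j : ℕ), n < j → EV S M T j := by
  induction n with
  | zero =>
    intro T h M _ _ j hj
    obtain ⟨j, rfl⟩ := Nat.exists_eq_add_of_lt hj
    have : Module.Injective S T := h
    exact EV.of_injective _
  | succ n ih =>
    intro T h M _ _ j hj
    obtain ⟨I, C, f, g, hs, hI, hC⟩ := h
    obtain ⟨j, rfl⟩ : ∃ k, j = k + 1 := ⟨j - 1, by omega⟩
    exact EV.co_left hs (ih C hC M j (by omega)) (EV.of_injective j)

theorem isSES_regular {M : Type u} [AddCommGroup M] [Module S M] {x : S} (hx : IsSMulRegular M x) :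
    IsSES (LinearMap.lsmul S M x) (Submodule.mkQ (x • (⊤ : Submodule S M))) := by
  refine ⟨hx, Submodule.mkQ_surjective _, ?_⟩
  rw [Submodule.ker_mkQ]
  ext m
  simp [Submodule.mem_smul_pointwise_iff_exists]

variable [IsNoetherianRing S] [IsLocalRing S]

theorem EV.nak {M C T : Type u} [AddCommGroup M] [Module S M] [Module.Finite S M]
    [AddCommGroup C] [Module S C]
    [AddCommGroup T] [Module S T] [Module.Finite S T] {x : S}
    (hx : x ∈ IsLocalRing.maximalIdeal S) {g : M →ₗ[S] C}
    (hs : IsSES (LinearMap.lsmul S M x) g) {i : ℕ}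
    (h : EV S C T (i+1)) : EV S M T i := by
  have hfin : Module.Finite S (Ext (ModuleCat.of S M) (ModuleCat.of S T) i) :=
    ModuleCat.finite_ext _ _ _ _
  have hsurj : ∀ e : Ext (ModuleCat.of S M) (ModuleCat.of S T) i, ∃ e', x • e' = e := by
    intro e
    obtain ⟨y, hy⟩ := Ext.contravariant_sequence_exact₁ hs.se (ModuleCat.of S T) e (add_comm 1 i)
      (Subsingleton.elim (α := Ext (ModuleCat.of S C) (ModuleCat.of S T) (i+1)) _ _)
    refine ⟨y, ?_⟩
    rw [← hy]
    have : hs.sc.f = x • 𝟙 (ModuleCat.of S M) := by ext; rfl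
    rw [this, Ext.mk₀_smul, Ext.smul_comp, Ext.mk₀_id_comp]
  have htop : (⊤ : Submodule S (Ext (ModuleCat.of S M) (ModuleCat.of S T) i)) = ⊥ := by
    apply Submodule.eq_bot_of_le_smul_of_le_jacobson_bot (IsLocalRing.maximalIdeal S) ⊤
      hfin.1
    · intro e _
      obtain ⟨e', rfl⟩ := hsurj e
      exact Submodule.smul_mem_smul hx trivial
    · exact IsLocalRing.maximalIdeal_le_jacobson _
  exact (Submodule.subsingleton_iff S).mp (subsingleton_of_bot_eq_top htop.symm)

theorem supportDim_nonneg (M : Type u) [AddCommGroup M] [Module S M] [Nontrivial M] :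
    (0 : WithBot ℕ∞) ≤ Module.supportDim S M := by
  obtain ⟨a, ha⟩ := WithBot.ne_bot_iff_exists.mp (Module.supportDim_ne_bot_of_nontrivial S M)
  rw [← ha]
  exact WithBot.coe_le_coe.mpr zero_le

theorem residue_noreg {T : Type u} [AddCommGroup T] [Module S T] {t : ℕ}
    (hV : ∀ (N : Type u) [AddCommGroup N] [Module S N] [Module.Finite S N], EV S N T (t+1))
    (M : Type u) [AddCommGroup M] [Module S M] [Module.Finite S M]
    (hx : ¬ ∃ x ∈ IsLocalRing.maximalIdeal S, IsSMulRegular M x) (hM : EV S M T t) :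
    EV S (S ⧸ IsLocalRing.maximalIdeal S) T t := by
  have hsimp : IsSimpleModule S (S ⧸ IsLocalRing.maximalIdeal S) := by
    rw [isSimpleModule_iff_isCoatom]; exact (IsLocalRing.maximalIdeal.isMaximal S).out
  have h1 : ¬ Subsingleton ((S ⧸ IsLocalRing.maximalIdeal S) →ₗ[S] M) := by
    rw [IsSMulRegular.subsingleton_linearMap_iff, Ideal.annihilator_quotient]
    exact hx
  rw [not_subsingleton_iff_nontrivial] at h1
  obtain ⟨f, hf⟩ := exists_ne (0 : (S ⧸ IsLocalRing.maximalIdeal S) →ₗ[S] M)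
  have hinj := (LinearMap.injective_or_eq_zero f).resolve_right hf
  exact EV.contra_left (isSES_coker hinj) hM (hV _)

theorem residue_step {T : Type u} [AddCommGroup T] [Module S T] [Module.Finite S T] (t : ℕ)
    (hV : ∀ (N : Type u) [AddCommGroup N] [Module S N] [Module.Finite S N], EV S N T (t+1)) (d : ℕ) :
    ∀ (M : Type u) [AddCommGroup M] [Module S M] [Module.Finite S M] [Nontrivial M],
      Module.supportDim S M ≤ d → d < t → (∀ j, t ≤ j + d → EV S M T j) →
      EV S (S ⧸ IsLocalRing.maximalIdeal S) T t := by
  induction d with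
  | zero =>
    intro M _ _ _ _ hd _ hj
    by_cases hx : ∃ x ∈ IsLocalRing.maximalIdeal S, IsSMulRegular M x
    · obtain ⟨x, hxm, hx⟩ := hx
      exfalso
      have h1 := Module.supportDim_quotSMulTop_succ_eq_supportDim hx hxm
      have : Nontrivial (QuotSMulTop x M) := nontrivial_quotSMulTop_of_mem_maximalIdeal M hxm
      have h2 := supportDim_nonneg (S := S) (QuotSMulTop x M)
      have h3 : (0 : WithBot ℕ∞) + 1 ≤ 0 := by
        calc (0 : WithBot ℕ∞) + 1 ≤ Module.supportDim S (QuotSMulTop x M) + 1 := by gcongr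
          _ ≤ 0 := by rw [h1]; exact hd
      exact absurd h3 (by simp)
    · exact residue_noreg hV M hx (hj t (by omega))
  | succ d ih =>
    intro M _ _ _ _ hd hdt hj
    by_cases hx : ∃ x ∈ IsLocalRing.maximalIdeal S, IsSMulRegular M x
    · obtain ⟨x, hxm, hx⟩ := hx
      have h1 := Module.supportDim_quotSMulTop_succ_eq_supportDim hx hxm
      have : Nontrivial (QuotSMulTop x M) := nontrivial_quotSMulTop_of_mem_maximalIdeal M hxm
      refine ih (QuotSMulTop x M) ?_ (by omega) ?_
      · rw [← h1] at hd
        obtain ⟨a, ha⟩ := WithBot.ne_bot_iff_exists.mp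
          (Module.supportDim_ne_bot_of_nontrivial S (QuotSMulTop x M))
        rw [← ha] at hd ⊢
        have h2 : a + 1 ≤ (d : ℕ∞) + 1 := by exact_mod_cast hd
        have h3 : a ≤ (d : ℕ∞) := (ENat.add_le_add_iff_right (by simp)).mp h2
        exact_mod_cast h3
      · intro j hjd
        obtain ⟨k, rfl⟩ : ∃ k, j = k + 1 := ⟨j - 1, by omega⟩
        exact EV.contra_right (isSES_regular hx) (hj _ (by omega)) (hj _ (by omega))
    · exact residue_noreg hV M hx (hj t (by omega))

theorem V_step {t d : ℕ}
    (hV : ∀ (N : Type u) [AddCommGroup N] [Module S N] [Module.Finite S N], EV S N S (t+1))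
    (hd : ringKrullDim S ≤ d) (hdt : d < t)
    (N : Type u) [AddCommGroup N] [Module S N] [hN : Module.Finite S N] : EV S N S t := by
  have hk : EV S (S ⧸ IsLocalRing.maximalIdeal S) S t := by
    refine residue_step t hV d S ?_ hdt ?_
    · rw [Module.supportDim_self_eq_ringKrullDim]; exact hd
    · intro j hj
      obtain ⟨k, rfl⟩ : ∃ k, j = k + 1 := ⟨j - 1, by omega⟩
      exact EV.of_projective k
  refine IsNoetherianRing.induction_on_isQuotientEquivQuotientPrime S hN
    (motive := fun N _ _ _ => EV S N S t) ?_ ?_ ?_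
  · intro N _ _ _ _
    exact EV.of_subsingleton_left t
  · intro N _ _ _ p e
    refine EV.congr_left e.symm ?_
    by_cases hp : p.asIdeal = IsLocalRing.maximalIdeal S
    · rw [hp]; exact hk
    · have hlt : p.asIdeal < IsLocalRing.maximalIdeal S :=
        lt_of_le_of_ne (IsLocalRing.le_maximalIdeal p.2.ne_top) hp
      obtain ⟨x, hxm, hxp⟩ := SetLike.exists_of_lt hlt
      have hreg : IsSMulRegular (S ⧸ p.asIdeal) x := by
        rw [isSMulRegular_iff_right_eq_zero_of_smul]
        intro m hm
        obtain ⟨y, rfl⟩ := Ideal.Quotient.mk_surjective m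
        have h1 : Ideal.Quotient.mk p.asIdeal (x * y) = 0 := hm
        rw [Ideal.Quotient.eq_zero_iff_mem] at h1 ⊢
        exact (p.2.mem_or_mem h1).resolve_left hxp
      exact EV.nak hxm (isSES_regular hreg) (hV _)
  · intro N₁ _ _ _ N₂ _ _ _ N₃ _ _ _ f g h1 h2 h3 h4 h5
    exact EV.contra_mid (IsSES.of_exact h1 h2 h3) h4 h5

theorem gor_vanish {n d : ℕ} (hid : idLE S n (ModuleCat.of S S)) (hd : ringKrullDim S ≤ d)
    (N : Type u) [AddCommGroup N] [Module S N] [Module.Finite S N] (i : ℕ) (hi : d < i) :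
    EV S N S i := by
  have key : ∀ k : ℕ, ∀ i, d < i → n < i + k → ∀ (N : Type u) [AddCommGroup N] [Module S N]
      [Module.Finite S N], EV S N S i := by
    intro k
    induction k with
    | zero => intro i _ hn N _ _ _; exact idLE_EV n _ hid N i hn
    | succ k ih =>
      intro i hi hn N _ _ _
      exact V_step (fun N _ _ _ => ih (i+1) (by omega) (by omega) N) hd hi N
  exact key (n+1) i hi (by omega) N

theorem mcm_vanish {d : ℕ} 
    (hV : ∀ i, d < i → ∀ (N : Type u) [AddCommGroup N] [Module S N] [Module.Finite S N], EV S N S i)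
    (rs : List S) (hrs : ∀ r ∈ rs, r ∈ IsLocalRing.maximalIdeal S) :
    ∀ (M : Type u) [AddCommGroup M] [Module S M] [Module.Finite S M],
    RingTheory.Sequence.IsWeaklyRegular M rs → ∀ i, d < i + rs.length → EV S M S i := by
  induction rs with
  | nil => intro M _ _ _ _ i hi; exact hV i hi M
  | cons r rs ih =>
    intro M _ _ _ hM i hi
    rw [RingTheory.Sequence.isWeaklyRegular_cons_iff] at hM
    have := ih (fun r hr => hrs r (by simp [hr])) (QuotSMulTop r M) hM.2 (i+1)
      (by simp at hi; omega)
    exact EV.nak (hrs r (by simp)) (isSES_regular hM.1) this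

end LocalTheory
section LocalizationStep

open Abelian

variable {R} {A B C M N : Type u} [AddCommGroup A] [Module R A] [AddCommGroup B] [Module R B]
  [AddCommGroup C] [Module R C] [AddCommGroup M] [Module R M] [AddCommGroup N] [Module R N]

theorem IsSES.localize {f : A →ₗ[R] B} {g : B →ₗ[R] C} (h : IsSES f g) (S : Submonoid R) :
    IsSES (LocalizedModule.map S f) (LocalizedModule.map S g) := by
  refine IsSES.of_exact ?_ ?_ ?_
  · exact IsLocalizedModule.map_injective S (LocalizedModule.mkLinearMap S A)
      (LocalizedModule.mkLinearMap S B) f h.1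
  · exact IsLocalizedModule.map_surjective S (LocalizedModule.mkLinearMap S B)
      (LocalizedModule.mkLinearMap S C) g h.2.1
  · exact LocalizedModule.map_exact S f g h.exact

theorem exists_cover (R : Type u) [CommRing R] (M : Type u) [AddCommGroup M] [Module R M]
    [Module.Finite R M] : ∃ (n : ℕ) (g : (Fin n → R) →ₗ[R] M), Function.Surjective g :=
  Module.Finite.exists_fin' R M

theorem extend_localize [IsNoetherianRing R] [Module.Finite R A] [Module.Finite R B] 
    (S : Submonoid R) {f : A →ₗ[R] B} {g : B →ₗ[R] C} (h : IsSES f g)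
    (hE : EV (Localization S) (LocalizedModule S C) (LocalizedModule S N) 1) (φ : A →ₗ[R] N) :
    ∃ s ∈ S, ∃ ψ : B →ₗ[R] N, ψ ∘ₗ f = s • φ := by
  obtain ⟨ψ, hψ⟩ := EV.extend (h.localize S) hE (LocalizedModule.map S φ)
  have hfp : Module.FinitePresentation R B := Module.finitePresentation_of_finite R B
  obtain ⟨k, s, hk⟩ := Module.FinitePresentation.exists_lift_of_isLocalizedModule S
    (LocalizedModule.mkLinearMap S N)
    ((ψ.restrictScalars R) ∘ₗ (LocalizedModule.mkLinearMap S B))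
  have h1 : (LocalizedModule.mkLinearMap S N).comp (k ∘ₗ f) =
      (LocalizedModule.mkLinearMap S N).comp (s • φ) := by
    ext a
    have h2 := LinearMap.congr_fun hk (f a)
    have h3 := LinearMap.congr_fun hψ (LocalizedModule.mkLinearMap S A a)
    have h4 : LocalizedModule.map S f (LocalizedModule.mkLinearMap S A a) =
      LocalizedModule.mkLinearMap S B (f a) := IsLocalizedModule.map_apply S _ _ _ _
    have h5 : LocalizedModule.map S φ (LocalizedModule.mkLinearMap S A a) =
      LocalizedModule.mkLinearMap S N (φ a) := IsLocalizedModule.map_apply S _ _ _ _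
    rw [LinearMap.comp_apply, h4, h5] at h3
    simp only [LinearMap.comp_apply, LinearMap.smul_apply, LinearMap.restrictScalars_apply] at h2 ⊢
    rw [h2, h3, Submonoid.smul_def, Submonoid.smul_def, LinearMap.map_smul]
  obtain ⟨t, ht⟩ := Module.Finite.exists_smul_of_comp_eq_of_isLocalizedModule S
    (LocalizedModule.mkLinearMap S N) _ _ h1
  refine ⟨t * s, S.mul_mem t.2 s.2, (t : R) • k, ?_⟩
  rw [mul_smul]
  exact ht

theorem ext_killed [IsNoetherianRing R] (S : Submonoid R) [Module.Finite R N] (i : ℕ) :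
    ∀ (M : Type u) [AddCommGroup M] [Module R M] [Module.Finite R M],
    EV (Localization S) (LocalizedModule S M) (LocalizedModule S N) (i+1) →
    ∀ e : Ext (ModuleCat.of R M) (ModuleCat.of R N) (i+1), ∃ s ∈ S, s • e = 0 := by
  induction i with
  | zero =>
    intro M _ _ _ hE e
    obtain ⟨n, g, hg⟩ := exists_cover R M
    obtain ⟨y, rfl⟩ := ext_of_proj (isSES_ker hg) (i := 0) e
    obtain ⟨y, rfl⟩ := (Ext.mk₀_bijective _ _).2 y
    obtain ⟨s, hs, ψ, hψ⟩ := extend_localize S (isSES_ker hg) hE y.hom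
    refine ⟨s, hs, ?_⟩
    have h1 := ext_zero_of_extend (isSES_ker hg) ψ
    have h2 : ModuleCat.ofHom (s • y.hom) = s • y := rfl
    rw [hψ, h2, Ext.mk₀_smul, Ext.comp_smul] at h1
    exact h1
  | succ i ih =>
    intro M _ _ _ hE e
    obtain ⟨n, g, hg⟩ := exists_cover R M
    obtain ⟨y, rfl⟩ := ext_of_proj (isSES_ker hg) (i := i+1) e
    obtain ⟨s, hs, h⟩ := ih (LinearMap.ker g)
      (EV.contra_left ((isSES_ker hg).localize S) (EV.of_projective i) hE) y
    refine ⟨s, hs, ?_⟩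
    rw [← Ext.comp_smul, h, Ext.comp_zero]

theorem EV.of_local [IsNoetherianRing R] [Module.Finite R N] [Module.Finite R M] (i : ℕ)
    (h : ∀ p : PrimeSpectrum R, EV (Localization p.asIdeal.primeCompl)
      (LocalizedModule p.asIdeal.primeCompl M) (LocalizedModule p.asIdeal.primeCompl N) (i+1)) :
    EV R M N (i+1) := by
  have key : ∀ x : Ext (ModuleCat.of R M) (ModuleCat.of R N) (i+1), x = 0 := fun x => by
    by_contra hx
    have hne : (LinearMap.ker (LinearMap.toSpanSingleton R _ x)) ≠ ⊤ := by
      intro htop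
      have : (1 : R) ∈ LinearMap.ker (LinearMap.toSpanSingleton R _ x) := htop ▸ trivial
      simp at this
      exact hx this
    obtain ⟨m, hm, hle⟩ := Ideal.exists_le_maximal _ hne
    obtain ⟨s, hs, h0⟩ := ext_killed m.primeCompl i M (h ⟨m, hm.isPrime⟩) x
    exact hs (hle (by simpa using h0))
  exact ⟨fun a b => by rw [key a, key b]⟩

end LocalizationStep
section MCMFacts

open Abelian

variable {R} [IsNoetherianRing R]

theorem height_dim (p : PrimeSpectrum R) : ∃ d : ℕ, heightE R p = d ∧
    ringKrullDim (Localization.AtPrime p.asIdeal) = d := by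
  have h1 : heightE R p = p.asIdeal.height := (PrimeSpectrum.height_eq_orderHeight p).symm
  have h2 : p.asIdeal.height ≠ ⊤ := Ideal.height_ne_top_of_isPrime
  obtain ⟨d, hd⟩ := ENat.ne_top_iff_exists.mp h2
  refine ⟨d, by rw [h1, hd], ?_⟩
  rw [IsLocalization.AtPrime.ringKrullDim_eq_height p.asIdeal, ← hd]
  rfl

theorem exists_seq_of_le_depth {S : Type u} [CommRing S] {I : Ideal S} {M : Type u}
    [AddCommGroup M] [Module S M] {d : ℕ} (h : (d : ℕ∞) ≤ depthE S I M) :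
    ∃ rs : List S, (∀ r ∈ rs, r ∈ I) ∧ RingTheory.Sequence.IsWeaklyRegular M rs ∧
      d ≤ rs.length := by
  cases d with
  | zero => exact ⟨[], by simp, by simp, by simp⟩
  | succ d =>
    have h1 : (d : ℕ∞) < depthE S I M := lt_of_lt_of_le (by exact_mod_cast Nat.lt_succ_self d) h
    obtain ⟨x, ⟨rs, h2, h3, rfl⟩, h4⟩ := lt_sSup_iff.mp h1
    exact ⟨rs, h2, h3, by exact_mod_cast h4⟩

/-- the Gorenstein hypothesis -/
abbrev GorHyp (R : Type u) [CommRing R] : Prop := ∀ p : PrimeSpectrum R, ∃ n : ℕ,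
      idLE (Localization.AtPrime p.asIdeal) n
        (ModuleCat.of (Localization.AtPrime p.asIdeal) (Localization.AtPrime p.asIdeal))

theorem gor_local_vanish (hG : GorHyp R) (p : PrimeSpectrum R) {d : ℕ} (hd : heightE R p = d)
    (i : ℕ) (hi : d < i) (N : Type u) [AddCommGroup N] [Module (Localization.AtPrime p.asIdeal) N]
    [Module.Finite (Localization.AtPrime p.asIdeal) N] :
    EV (Localization.AtPrime p.asIdeal) N (Localization.AtPrime p.asIdeal) i := by
  obtain ⟨n, hn⟩ := hG p
  obtain ⟨d', h1, h2⟩ := height_dim p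
  obtain rfl : d = d' := by rw [hd] at h1; exact_mod_cast h1
  have : IsNoetherianRing (Localization.AtPrime p.asIdeal) :=
    IsLocalization.isNoetherianRing p.asIdeal.primeCompl _ inferInstance
  exact gor_vanish hn h2.le N i hi

theorem mcm_EV (hG : GorHyp R) {Z : ModuleCat.{u} R} (hZ : Z ∈ MCMcat R) (i : ℕ) :
    EV R Z R (i+1) := by
  have := hZ.1
  refine EV.of_local i fun p => ?_
  obtain ⟨d, hd, -⟩ := height_dim p
  have h1 := hZ.2 p
  rw [hd] at h1
  obtain ⟨rs, h2, h3, h4⟩ := exists_seq_of_le_depth h1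
  have : IsNoetherianRing (Localization.AtPrime p.asIdeal) :=
    IsLocalization.isNoetherianRing p.asIdeal.primeCompl _ inferInstance
  exact EV.of_fg_projective (mcm_vanish (d := d)
    (fun i hi N _ _ _ => gor_local_vanish hG p hd i hi N) rs h2 _ h3 (i+1) (by omega))

theorem EV.of_pd {M : Type u} [AddCommGroup M] [Module R M] (h : ∀ i, EV R M R (i+1)) (n : ℕ) :
    ∀ (N : ModuleCat.{u} R), Module.Finite R N → pdLE R n N → ∀ i, EV R M N (i+1) := by
  induction n with
  | zero =>
    intro N _ hN i
    have : Module.Projective R N := hN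
    exact (h i).of_fg_projective
  | succ n ih =>
    rintro N _ ⟨K, P, f, g, hP, hP', hs, hK⟩ i
    have : Module.Finite R K := Module.Finite.of_injective f hs.1
    exact EV.co_right hs (h i).of_fg_projective (ih K this hK (i+1))

theorem height_zero_of_ass {Z : ModuleCat.{u} R} (hZ : Z ∈ MCMcat R) (p : PrimeSpectrum R) (z : Z)
    (hz : ∀ r, r • z = 0 ↔ r ∈ p.asIdeal) : heightE R p = 0 := by
  obtain ⟨d, hd, -⟩ := height_dim p
  have h1 := hZ.2 p
  rw [hd] at h1
  obtain ⟨rs, h2, h3, h4⟩ := exists_seq_of_le_depth h1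
  rw [hd]
  cases rs with
  | nil => simp at h4; simp [h4]
  | cons r rs =>
    exfalso
    rw [RingTheory.Sequence.isWeaklyRegular_cons_iff] at h3
    set z' := LocalizedModule.mkLinearMap p.asIdeal.primeCompl Z z with hz'
    have hne : z' ≠ 0 := by
      rw [hz', Ne, IsLocalizedModule.eq_zero_iff p.asIdeal.primeCompl]
      rintro ⟨s, hs⟩
      exact s.2 ((hz s).mp hs)
    have hle : IsLocalRing.maximalIdeal (Localization.AtPrime p.asIdeal) ≤
        LinearMap.ker (LinearMap.toSpanSingleton (Localization.AtPrime p.asIdeal) _ z') := by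
      rw [← Localization.AtPrime.map_eq_maximalIdeal, Ideal.map_le_iff_le_comap]
      intro a ha
      simp only [Ideal.mem_comap, LinearMap.mem_ker, LinearMap.toSpanSingleton_apply]
      rw [algebraMap_smul, hz', ← LinearMap.map_smul, (hz a).mpr ha, map_zero]
    have h5 : r • z' = 0 := hle (h2 r (by simp))
    exact hne (isSMulRegular_iff_right_eq_zero_of_smul.mp h3.1 z' h5)

theorem mcm_torsionless (hG : GorHyp R) {Z : ModuleCat.{u} R} (hZ : Z ∈ MCMcat R) (z : Z)
    (hz : ∀ f : Z →ₗ[R] R, f z = 0) : z = 0 := by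
  have := hZ.1
  let K : Submodule R Z := ⨅ f : Z →ₗ[R] R, LinearMap.ker f
  have hK : ∀ x, x ∈ K ↔ ∀ f : Z →ₗ[R] R, f x = 0 := by simp [K]
  by_contra hne
  have : Nontrivial K := ⟨⟨⟨z, (hK z).mpr hz⟩, 0, fun h => hne (congrArg Subtype.val h)⟩⟩
  obtain ⟨q, hq⟩ := associatedPrimes.nonempty R K
  obtain ⟨hqp, ⟨w, hwK⟩, hw⟩ := isAssociatedPrime_iff.mp hq
  have hann : ∀ r, r • w = 0 ↔ r ∈ q := by
    intro r
    rw [hw, Submodule.mem_colon_singleton, Submodule.mem_bot, ← Subtype.coe_inj]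
    rfl
  let p : PrimeSpectrum R := ⟨q, hqp⟩
  have h0 : heightE R p = 0 := height_zero_of_ass hZ p w hann
  have hmin : q ∈ minimalPrimes R := by
    rw [← Ideal.height_eq_zero_iff]
    exact (PrimeSpectrum.height_eq_orderHeight p).trans h0
  have hbot : Module.annihilator R R = ⊥ := Module.annihilator_eq_bot.mpr inferInstance
  have hass : q ∈ associatedPrimes R R :=
    Module.associatedPrimes.minimalPrimes_annihilator_subset_associatedPrimes R R
      (by rw [hbot]; exact hmin)
  obtain ⟨-, a, ha⟩ := isAssociatedPrime_iff.mp hass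
  have hanna : ∀ r, r • a = 0 ↔ r ∈ q := by
    intro r
    rw [ha, Submodule.mem_colon_singleton, Submodule.mem_bot]
  let fz : (R ⧸ q) →ₗ[R] Z := Submodule.liftQ q (LinearMap.toSpanSingleton R Z w)
    (fun r hr => (hann r).mpr hr)
  let fa : (R ⧸ q) →ₗ[R] R := Submodule.liftQ q (LinearMap.toSpanSingleton R R a)
    (fun r hr => (hanna r).mpr hr)
  have hinj : Function.Injective fz := by
    rw [injective_iff_map_eq_zero]
    intro r hr
    obtain ⟨r, rfl⟩ := Submodule.Quotient.mk_surjective _ r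
    exact (Submodule.Quotient.mk_eq_zero q).mpr ((hann r).mp hr)
  have hEV : EV (Localization q.primeCompl) (LocalizedModule q.primeCompl (Z ⧸ LinearMap.range fz))
      (LocalizedModule q.primeCompl R) 1 :=
    EV.of_fg_projective (gor_local_vanish hG p (d := 0) h0 1 (by omega) _)
  obtain ⟨s, hs, ψ, hψ⟩ := extend_localize q.primeCompl (isSES_coker hinj) hEV fa
  have h1 := LinearMap.congr_fun hψ (Submodule.Quotient.mk 1)
  have h2 : fz (Submodule.Quotient.mk 1) = w := by
    show (1 : R) • w = w
    simp
  have h3 : fa (Submodule.Quotient.mk 1) = a := by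
    show (1 : R) • a = a
    simp
  rw [LinearMap.comp_apply, LinearMap.smul_apply, h2, h3, (hK w).mp hwK ψ] at h1
  exact hs ((hanna s).mp h1.symm)

theorem finite_dual (R : Type u) [CommRing R] [IsNoetherianRing R] (M : Type u) [AddCommGroup M]
    [Module R M] [Module.Finite R M] : Module.Finite R (M →ₗ[R] R) := inferInstance

/-- MCM modules embed in free modules with totally good cokernel -/
theorem mcm_embed (hG : GorHyp R) {Z : ModuleCat.{u} R} (hZ : Z ∈ MCMcat R) :
    ∃ (n : ℕ) (v : Z →ₗ[R] (Fin n → R)), Function.Injective v ∧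
      ∀ i, EV R ((Fin n → R) ⧸ LinearMap.range v) R (i+1) := by
  have := hZ.1
  have := finite_dual R Z
  obtain ⟨n, g, hg⟩ := exists_cover R (Z →ₗ[R] R)
  let v : Z →ₗ[R] (Fin n → R) := LinearMap.pi fun i => g (Pi.single i 1)
  have hfac : ∀ φ : Z →ₗ[R] R, ∃ ψ : (Fin n → R) →ₗ[R] R, ψ ∘ₗ v = φ := by
    intro φ
    obtain ⟨c, rfl⟩ := hg φ
    refine ⟨∑ i, c i • LinearMap.proj i, ?_⟩
    ext z
    conv_rhs => rw [pi_eq_sum_univ' c]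
    simp [v, LinearMap.sum_apply, map_sum]
  have hv : Function.Injective v := by
    rw [injective_iff_map_eq_zero]
    intro z hz
    refine mcm_torsionless hG hZ z fun φ => ?_
    obtain ⟨ψ, rfl⟩ := hfac φ
    rw [LinearMap.comp_apply, hz, map_zero]
  refine ⟨n, v, hv, fun i => ?_⟩
  cases i with
  | zero => exact EV.of_extend (isSES_coker hv) hfac
  | succ i => exact EV.contra_right (isSES_coker hv) (mcm_EV hG hZ i) (EV.of_projective _)

end MCMFacts
section Categorical

open Abelian

variable {R} {A B C K P M N E : Type u} [AddCommGroup A] [Module R A] [AddCommGroup B] [Module R B]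
  [AddCommGroup C] [Module R C] [AddCommGroup K] [Module R K] [AddCommGroup P] [Module R P]
  [AddCommGroup M] [Module R M] [AddCommGroup N] [Module R N] [AddCommGroup E] [Module R E]

theorem lift_inj (f : A →ₗ[R] B) (hf : Function.Injective f) (k : M →ₗ[R] B)
    (hk : ∀ m, ∃ a, f a = k m) : ∃ l : M →ₗ[R] A, ∀ m, f (l m) = k m := by
  refine ⟨(LinearEquiv.ofInjective f hf).symm.toLinearMap ∘ₗ
    k.codRestrict (LinearMap.range f) (fun m => by simpa using hk m), fun m => ?_⟩
  have := (LinearEquiv.ofInjective f hf).apply_symm_apply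
    (k.codRestrict (LinearMap.range f) (fun m => by simpa using hk m) m)
  exact congrArg Subtype.val this

theorem desc_surj (g : B →ₗ[R] C) (hg : Function.Surjective g) (k : B →ₗ[R] M)
    (hk : ∀ b, g b = 0 → k b = 0) : ∃ l : C →ₗ[R] M, ∀ b, l (g b) = k b := by
  refine ⟨(LinearMap.ker g).liftQ k (fun b hb => hk b hb) ∘ₗ
    (g.quotKerEquivOfSurjective hg).symm.toLinearMap, fun b => ?_⟩
  have : (g.quotKerEquivOfSurjective hg).symm (g b) = Submodule.Quotient.mk b := by
    rw [LinearEquiv.symm_apply_eq]; rfl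
  rw [LinearMap.comp_apply, LinearEquiv.coe_coe, this]
  rfl

theorem isSES_intro {f : A →ₗ[R] B} {g : B →ₗ[R] C} (h1 : ∀ a, f a = 0 → a = 0)
    (h2 : ∀ c, ∃ b, g b = c) (h3 : ∀ a, g (f a) = 0) (h4 : ∀ b, g b = 0 → ∃ a, f a = b) :
    IsSES f g :=
  IsSES.of_exact ((injective_iff_map_eq_zero f).mpr h1) h2
    (fun b => ⟨h4 b, fun ⟨a, ha⟩ => ha ▸ h3 a⟩)

/-- unbundled membership -/
abbrev Mem (𝒳 : Set (ModuleCat.{u} R)) (M : Type u) [AddCommGroup M] [Module R M] : Prop :=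
  ModuleCat.of R M ∈ 𝒳

variable {𝒳 𝒴 𝒵 : Set (ModuleCat.{u} R)}

theorem IsResolving.mext (h : IsResolving R 𝒳) {f : A →ₗ[R] B} {g : B →ₗ[R] C} (hs : IsSES f g)
    (hA : Mem 𝒳 A) (hC : Mem 𝒳 C) : Mem 𝒳 B :=
  h.ext_closed (ModuleCat.of R A) (ModuleCat.of R B) (ModuleCat.of R C) f g hs hA hC

theorem IsResolving.mproj (h : IsResolving R 𝒳) (M : Type u) [AddCommGroup M] [Module R M]
    [Module.Finite R M] [Module.Projective R M] : Mem 𝒳 M :=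
  h.proj_mem (ModuleCat.of R M) ‹_› ‹_›

theorem IsResolving.msyz [IsNoetherianRing R] (h : IsResolving R 𝒳) {f : K →ₗ[R] P} {g : P →ₗ[R] M}
    [hP : Module.Finite R P] [hP' : Module.Projective R P] (hs : IsSES f g)
    (hM : Mem 𝒳 M) : Mem 𝒳 K :=
  h.syzygy_closed (ModuleCat.of R K) (ModuleCat.of R P) (ModuleCat.of R M) f g hs
    (Module.Finite.of_injective f hs.1) hP hP' hM

theorem IsResolving.mfin (h : IsResolving R 𝒳) (hM : Mem 𝒳 M) : Module.Finite R M :=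
  h.fg (ModuleCat.of R M) hM

theorem IsResolving.mretract (h : IsResolving R 𝒳) (s : M →ₗ[R] B) (r : B →ₗ[R] M)
    (hr : ∀ m, r (s m) = m) (hB : Mem 𝒳 B) : Mem 𝒳 M := by
  let toF : B →ₗ[R] M × LinearMap.ker r := r.prod
    ((LinearMap.id - s ∘ₗ r).codRestrict (LinearMap.ker r) (fun b => by simp [hr]))
  let inv : M × LinearMap.ker r →ₗ[R] B := s.coprod (LinearMap.ker r).subtype
  have h1 : toF ∘ₗ inv = LinearMap.id := by
    apply LinearMap.ext
    rintro ⟨m, n, hn⟩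
    have hn' : r n = 0 := hn
    apply Prod.ext
    · simp [toF, inv, hr, hn']
    · apply Subtype.ext
      simp [toF, inv, hr, hn']
  have h2 : inv ∘ₗ toF = LinearMap.id := by
    apply LinearMap.ext
    intro b
    simp [toF, inv]
  refine h.summand_closed (ModuleCat.of R M) (ModuleCat.of R (LinearMap.ker r))
    (h.iso_closed (ModuleCat.of R B) _ ⟨LinearEquiv.ofLinearMap toF inv h1 h2⟩ hB)

/-- modules which are extensions of `𝒴` by `𝒵` -/
def DD (𝒴 𝒵 : Set (ModuleCat.{u} R)) (E : Type u) [AddCommGroup E] [Module R E] : Prop :=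
  ∃ (Z Y : Type u) (_ : AddCommGroup Z) (_ : Module R Z) (_ : AddCommGroup Y) (_ : Module R Y)
    (f : Z →ₗ[R] E) (g : E →ₗ[R] Y), Mem 𝒵 Z ∧ Mem 𝒴 Y ∧ IsSES f g

/-- retracts of such -/
def XX (𝒴 𝒵 : Set (ModuleCat.{u} R)) (M : Type u) [AddCommGroup M] [Module R M] : Prop :=
  ∃ (E : Type u) (_ : AddCommGroup E) (_ : Module R E) (s : M →ₗ[R] E) (r : E →ₗ[R] M),
    (∀ m, r (s m) = m) ∧ DD 𝒴 𝒵 E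

theorem DD.of_left (h𝒴 : IsResolving R 𝒴) (h : Mem 𝒵 M) : DD 𝒴 𝒵 M :=
  ⟨M, PUnit, _, inferInstance, inferInstance, inferInstance, LinearMap.id, 0, h, h𝒴.mproj PUnit,
    isSES_intro (fun _ h => h) (fun c => ⟨0, Subsingleton.elim _ _⟩) (fun _ => rfl)
      (fun b _ => ⟨b, rfl⟩)⟩

theorem DD.of_right (h𝒵 : IsResolving R 𝒵) (h : Mem 𝒴 M) : DD 𝒴 𝒵 M :=
  ⟨PUnit, M, inferInstance, inferInstance, _, inferInstance, 0, LinearMap.id, h𝒵.mproj PUnit, h,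
    isSES_intro (fun _ _ => Subsingleton.elim _ _) (fun c => ⟨c, rfl⟩) (fun _ => rfl)
      (fun b h => ⟨0, h.symm⟩)⟩

theorem DD.xx (h : DD 𝒴 𝒵 M) : XX 𝒴 𝒵 M :=
  ⟨M, _, inferInstance, LinearMap.id, LinearMap.id, fun _ => rfl, h⟩

theorem XX.retract (h : XX 𝒴 𝒵 B) (s : M →ₗ[R] B) (r : B →ₗ[R] M) (hr : ∀ m, r (s m) = m) :
    XX 𝒴 𝒵 M := by
  obtain ⟨E, _, _, s', r', hr', hE⟩ := h
  exact ⟨E, _, inferInstance, s' ∘ₗ s, r ∘ₗ r', fun m => by simp [hr', hr], hE⟩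

/-- the pairing vanishing hypothesis -/
abbrev Orth (𝒴 𝒵 : Set (ModuleCat.{u} R)) : Prop :=
  ∀ (Z Y : Type u) [AddCommGroup Z] [Module R Z] [AddCommGroup Y] [Module R Y],
    Mem 𝒵 Z → Mem 𝒴 Y → EV R Z Y 1

theorem DD.ext (h𝒴 : IsResolving R 𝒴) (h𝒵 : IsResolving R 𝒵) (hO : Orth 𝒴 𝒵)
    {a : A →ₗ[R] E} {b : E →ₗ[R] B} (hs : IsSES a b) (hA : DD 𝒴 𝒵 A) (hB : DD 𝒴 𝒵 B) :
    DD 𝒴 𝒵 E := by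
  obtain ⟨Z1, Y1, _, _, _, _, f1, g1, hZ1, hY1, hs1⟩ := hA
  obtain ⟨Z2, Y2, _, _, _, _, f2, g2, hZ2, hY2, hs2⟩ := hB
  let E' : Submodule R E := LinearMap.ker (g2 ∘ₗ b)
  have hE' : ∀ e : E', g2 (b e) = 0 := fun e => e.2
  let a' : A →ₗ[R] E' := a.codRestrict E' (fun x => by
    show g2 (b (a x)) = 0
    rw [hs.comp_zero, map_zero])
  have ha' : ∀ x, ((a' x : E') : E) = a x := fun _ => rfl
  obtain ⟨b', hb'⟩ := lift_inj f2 hs2.1 (b ∘ₗ E'.subtype) (fun e => hs2.exists_of (hE' e))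
  have hb : ∀ e : E', f2 (b' e) = b e := hb'
  have hs' : IsSES a' b' := by
    refine isSES_intro ?_ ?_ ?_ ?_
    · intro x hx
      apply hs.1
      rw [← ha', hx, map_zero]; rfl
    · intro z
      obtain ⟨e, he⟩ := hs.2.1 (f2 z)
      refine ⟨⟨e, ?_⟩, ?_⟩
      · show g2 (b e) = 0
        rw [he, hs2.comp_zero]
      · apply hs2.1
        rw [hb]; exact he
    · intro x
      apply hs2.1
      rw [hb, ha', hs.comp_zero, map_zero]
    · intro e he
      have h1 : b e = 0 := by rw [← hb, he, map_zero]
      obtain ⟨x, hx⟩ := hs.exists_of h1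
      exact ⟨x, Subtype.ext hx⟩
  obtain ⟨ρ, hρ⟩ := EV.extend hs' (hO Z2 Y1 hZ2 hY1) g1
  have hρ' : ∀ x, ρ (a' x) = g1 x := fun x => LinearMap.congr_fun hρ x
  have hρs : Function.Surjective ρ := fun y => by
    obtain ⟨x, hx⟩ := hs1.2.1 y
    exact ⟨a' x, by rw [hρ', hx]⟩
  let Z := LinearMap.ker ρ
  have hZρ : ∀ z : Z, ρ z = 0 := fun z => z.2
  let i : Z1 →ₗ[R] Z := (a' ∘ₗ f1).codRestrict Z (fun x => by
    show ρ (a' (f1 x)) = 0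
    rw [hρ', hs1.comp_zero])
  have hi : ∀ x, ((i x : Z) : E') = a' (f1 x) := fun _ => rfl
  have hsZ : IsSES i (b' ∘ₗ Z.subtype) := by
    refine isSES_intro ?_ ?_ ?_ ?_
    · intro x hx
      apply hs1.1
      apply hs'.1
      rw [← hi, hx, map_zero, map_zero]; rfl
    · intro z
      obtain ⟨e, he⟩ := hs'.2.1 z
      obtain ⟨x, hx⟩ := hs1.2.1 (ρ e)
      refine ⟨⟨e - a' x, ?_⟩, ?_⟩
      · show ρ (e - a' x) = 0
        rw [map_sub, hρ', hx, sub_self]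
      · show b' (e - a' x) = z
        rw [map_sub, hs'.comp_zero, he, sub_zero]
    · intro x
      show b' (a' (f1 x)) = 0
      exact hs'.comp_zero _
    · rintro ⟨e, he⟩ h0
      obtain ⟨x, hx⟩ := hs'.exists_of (show b' e = 0 from h0)
      have h1 : g1 x = 0 := by rw [← hρ', hx]; exact he
      obtain ⟨z, hz⟩ := hs1.exists_of h1
      refine ⟨z, Subtype.ext ?_⟩
      rw [hi, hz, hx]
  have hZ : Mem 𝒵 Z := h𝒵.mext hsZ hZ1 hZ2
  let j : Z →ₗ[R] E := E'.subtype ∘ₗ Z.subtype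
  have hj : Function.Injective j := fun x y h => Subtype.ext (Subtype.ext h)
  have hjE : ∀ z : Z, j z = ((z : E') : E) := fun _ => rfl
  obtain ⟨l, hl⟩ := desc_surj ρ hρs ((LinearMap.range j).mkQ ∘ₗ E'.subtype) (fun e he => by
    show (Submodule.Quotient.mk (e : E) : E ⧸ LinearMap.range j) = 0
    rw [Submodule.Quotient.mk_eq_zero]
    exact ⟨⟨e, he⟩, rfl⟩)
  have hl' : ∀ e : E', l (ρ e) = Submodule.Quotient.mk (e : E) := hl
  let m : (E ⧸ LinearMap.range j) →ₗ[R] Y2 := (LinearMap.range j).liftQ (g2 ∘ₗ b) (by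
    rintro _ ⟨z, rfl⟩
    exact hE' z)
  have hm : ∀ e, m (Submodule.Quotient.mk e) = g2 (b e) := fun _ => rfl
  have hsY : IsSES l m := by
    refine isSES_intro ?_ ?_ ?_ ?_
    · intro y hy
      obtain ⟨e, rfl⟩ := hρs y
      rw [hl', Submodule.Quotient.mk_eq_zero] at hy
      obtain ⟨z, hz⟩ := hy
      have : (z : E') = e := Subtype.ext hz
      rw [← this]; exact hZρ z
    · intro y
      obtain ⟨x, rfl⟩ := hs2.2.1 y
      obtain ⟨e, rfl⟩ := hs.2.1 x
      exact ⟨Submodule.Quotient.mk e, hm e⟩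
    · intro y
      obtain ⟨e, rfl⟩ := hρs y
      rw [hl', hm]; exact hE' e
    · intro q hq
      obtain ⟨e, rfl⟩ := Submodule.Quotient.mk_surjective _ q
      rw [hm] at hq
      exact ⟨ρ ⟨e, hq⟩, hl' ⟨e, hq⟩⟩
  exact ⟨Z, E ⧸ LinearMap.range j, _, inferInstance, _, inferInstance, j, _, hZ,
    h𝒴.mext hsY hY1 hY2, isSES_coker hj⟩

theorem XX.ext (h𝒴 : IsResolving R 𝒴) (h𝒵 : IsResolving R 𝒵) (hO : Orth 𝒴 𝒵)
    {f : A →ₗ[R] B} {g : B →ₗ[R] C} (hs : IsSES f g) (hA : XX 𝒴 𝒵 A) (hC : XX 𝒴 𝒵 C) :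
    XX 𝒴 𝒵 B := by
  obtain ⟨E1, _, _, s1, r1, hr1, hE1⟩ := hA
  obtain ⟨E2, _, _, s2, r2, hr2, hE2⟩ := hC
  let N1 := LinearMap.ker r1
  let N2 := LinearMap.ker r2
  have hN1 : ∀ n : N1, r1 n = 0 := fun n => n.2
  have hN2 : ∀ n : N2, r2 n = 0 := fun n => n.2
  let pr1 : E1 →ₗ[R] N1 := (LinearMap.id - s1 ∘ₗ r1).codRestrict N1 (fun e => by
    show r1 (e - s1 (r1 e)) = 0
    rw [map_sub, hr1, sub_self])
  have hpr1 : ∀ e, ((pr1 e : N1) : E1) = e - s1 (r1 e) := fun _ => rfl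
  let α : E1 →ₗ[R] B × (N1 × N2) := (f ∘ₗ r1).prod (pr1.prod 0)
  have hα : ∀ e, α e = (f (r1 e), (pr1 e, 0)) := fun _ => rfl
  let β : B × (N1 × N2) →ₗ[R] E2 :=
    (s2 ∘ₗ g).coprod (N2.subtype ∘ₗ LinearMap.snd R N1 N2)
  have hβ : ∀ x y z, β (x, (y, z)) = s2 (g x) + (z : E2) := fun _ _ _ => rfl
  have hsE : IsSES α β := by
    refine isSES_intro ?_ ?_ ?_ ?_
    · intro e he
      rw [hα] at he
      have h1 : f (r1 e) = 0 := congrArg Prod.fst he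
      have h2 : pr1 e = 0 := congrArg (fun t => t.2.1) he
      have h3 : r1 e = 0 := hs.1 (by rw [h1, map_zero])
      have h4 := hpr1 e
      rw [h2, h3, map_zero, sub_zero] at h4
      exact h4.symm
    · intro e
      obtain ⟨x, hx⟩ := hs.2.1 (r2 e)
      refine ⟨(x, (0, ⟨e - s2 (r2 e), ?_⟩)), ?_⟩
      · show r2 (e - s2 (r2 e)) = 0
        rw [map_sub, hr2, sub_self]
      · rw [hβ, hx]; simp
    · intro e
      rw [hα, hβ, hs.comp_zero]; simp
    · rintro ⟨x, y, z⟩ h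
      rw [hβ] at h
      have h1 : g x = 0 := by
        have := congrArg r2 h
        rwa [map_add, hr2, hN2, add_zero, map_zero] at this
      have h2 : z = 0 := by
        rw [h1, map_zero, zero_add] at h
        exact Subtype.ext h
      obtain ⟨c, hc⟩ := hs.exists_of h1
      refine ⟨s1 c + y, ?_⟩
      have h3 : r1 (s1 c + y) = c := by rw [map_add, hr1, hN1, add_zero]
      rw [hα, h3, hc, h2]
      refine Prod.ext rfl (Prod.ext (Subtype.ext ?_) rfl)
      show ((pr1 (s1 c + y) : N1) : E1) = y
      rw [hpr1, h3]; simp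
  exact (DD.ext h𝒴 h𝒵 hO hsE hE1 hE2).xx.retract (LinearMap.inl R B _) (LinearMap.fst R B _)
    (fun _ => rfl)

variable [IsNoetherianRing R]

theorem DD.syz (h𝒴 : IsResolving R 𝒴) (h𝒵 : IsResolving R 𝒵) (hE : DD 𝒴 𝒵 E)
    [Module.Finite R P] [Module.Projective R P] (π : P →ₗ[R] E) (hπ : Function.Surjective π) :
    XX 𝒴 𝒵 (LinearMap.ker π) := by
  obtain ⟨Z, Y, _, _, _, _, f, g, hZ, hY, hs⟩ := hE
  let L := LinearMap.ker (g ∘ₗ π)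
  have hL : ∀ l : L, g (π l) = 0 := fun l => l.2
  have hLY : Mem 𝒴 L := h𝒴.msyz (isSES_ker (g := g ∘ₗ π) (hs.2.1.comp hπ)) hY
  obtain ⟨lam, hlam⟩ := lift_inj f hs.1 (π ∘ₗ L.subtype) (fun l => hs.exists_of (hL l))
  have hlam' : ∀ l : L, f (lam l) = π l := hlam
  have hlams : Function.Surjective lam := fun z => by
    obtain ⟨x, hx⟩ := hπ (f z)
    refine ⟨⟨x, ?_⟩, hs.1 ?_⟩
    · show g (π x) = 0
      rw [hx, hs.comp_zero]
    · rw [hlam']; exact hx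
  have := h𝒵.mfin hZ
  obtain ⟨n, q, hq⟩ := exists_cover R Z
  have hΩ : Mem 𝒵 (LinearMap.ker q) := h𝒵.msyz (isSES_ker hq) hZ
  let W := LinearMap.ker (lam ∘ₗ LinearMap.fst R L (Fin n → R) - q ∘ₗ LinearMap.snd R L (Fin n → R))
  have hW : ∀ w : L × (Fin n → R), w ∈ W ↔ lam w.1 = q w.2 := fun w => by
    show lam w.1 - q w.2 = 0 ↔ _
    exact sub_eq_zero
  let i : LinearMap.ker q →ₗ[R] W :=
    ((LinearMap.inr R L (Fin n → R)) ∘ₗ (LinearMap.ker q).subtype).codRestrict W (fun x => by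
      rw [hW]
      show lam 0 = q x
      rw [map_zero]; exact x.2.symm)
  let fst : W →ₗ[R] L := LinearMap.fst R L (Fin n → R) ∘ₗ W.subtype
  let snd : W →ₗ[R] (Fin n → R) := LinearMap.snd R L (Fin n → R) ∘ₗ W.subtype
  have hfs : ∀ w : W, lam (fst w) = q (snd w) := fun w => (hW w).mp w.2
  have hWext : ∀ w w' : W, fst w = fst w' → snd w = snd w' → w = w' := fun w w' h1 h2 =>
    Subtype.ext (Prod.ext h1 h2)
  have hsW : IsSES i fst := by
    refine isSES_intro ?_ ?_ ?_ ?_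
    · intro x hx
      exact Subtype.ext (congrArg snd hx)
    · intro l
      obtain ⟨x, hx⟩ := hq (lam l)
      exact ⟨⟨(l, x), (hW _).mpr hx.symm⟩, rfl⟩
    · intro x; rfl
    · intro w hw
      refine ⟨⟨snd w, ?_⟩, hWext _ _ hw.symm rfl⟩
      show q (snd w) = 0
      rw [← hfs, hw, map_zero]
  have hDW : DD 𝒴 𝒵 W := ⟨_, _, _, inferInstance, _, inferInstance, i, fst, hΩ, hLY, hsW⟩
  have hsnd : Function.Surjective snd := fun x => by
    obtain ⟨l, hl⟩ := hlams (q x)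
    exact ⟨⟨(l, x), (hW _).mpr hl⟩, rfl⟩
  obtain ⟨σ, hσ⟩ := Module.projective_lifting_property snd LinearMap.id hsnd
  have hσ' : ∀ x, snd (σ x) = x := fun x => LinearMap.congr_fun hσ x
  let kL : LinearMap.ker π →ₗ[R] L := (LinearMap.ker π).subtype.codRestrict L (fun x => by
    show g (π x) = 0
    rw [show π x = 0 from x.2, map_zero])
  have hkL : ∀ x : LinearMap.ker π, lam (kL x) = 0 := fun x => hs.1 (by
    rw [hlam', map_zero]; exact x.2)
  let s : LinearMap.ker π →ₗ[R] W := (kL.prod 0).codRestrict W (fun x => by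
    rw [hW]
    show lam (kL x) = q 0
    rw [hkL, map_zero])
  let r : W →ₗ[R] LinearMap.ker π :=
    (L.subtype ∘ₗ fst ∘ₗ (LinearMap.id - σ ∘ₗ snd)).codRestrict (LinearMap.ker π) (fun w => by
      show π (fst (w - σ (snd w)) : L) = 0
      rw [← hlam', hfs, map_sub, hσ', sub_self, map_zero, map_zero])
  refine hDW.xx.retract s r (fun x => Subtype.ext ?_)
  show ((fst (s x - σ (snd (s x))) : L) : P) = x
  have h1 : snd (s x) = 0 := rfl
  rw [h1, map_zero, sub_zero]
  rfl

theorem XX.fin (h𝒴 : IsResolving R 𝒴) (h𝒵 : IsResolving R 𝒵) (h : XX 𝒴 𝒵 M) :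
    Module.Finite R M := by
  obtain ⟨E, _, _, s, r, hr, Z, Y, _, _, _, _, f, g, hZ, hY, hs⟩ := h
  have h1 := h𝒵.mfin hZ
  have h2 := h𝒴.mfin hY
  have : IsNoetherian R E := isNoetherian_of_range_eq_ker f g hs.2.2
  exact Module.Finite.of_surjective r (fun m => ⟨s m, hr m⟩)

theorem XX.syz (h𝒴 : IsResolving R 𝒴) (h𝒵 : IsResolving R 𝒵) (h : XX 𝒴 𝒵 M)
    [Module.Finite R P] [Module.Projective R P] {k : K →ₗ[R] P} {π : P →ₗ[R] M}
    (hs : IsSES k π) : XX 𝒴 𝒵 K := by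
  obtain ⟨E, _, _, s, r, hr, hE⟩ := h
  have hEf : Module.Finite R E := hE.xx.fin h𝒴 h𝒵
  obtain ⟨n, π', hπ'⟩ := exists_cover R (LinearMap.ker r)
  have hrπ' : ∀ y, r (π' y) = 0 := fun y => (π' y).2
  let bigP : P × (Fin n → R) →ₗ[R] E := (s ∘ₗ π).coprod ((LinearMap.ker r).subtype ∘ₗ π')
  have hbigP : ∀ x y, bigP (x, y) = s (π x) + (π' y : E) := fun _ _ => rfl
  have hbigPs : Function.Surjective bigP := fun e => by
    obtain ⟨x, hx⟩ := hs.2.1 (r e)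
    obtain ⟨y, hy⟩ := hπ' ⟨e - s (r e), by
      show r (e - s (r e)) = 0
      rw [map_sub, hr, sub_self]⟩
    exact ⟨(x, y), by rw [hbigP, hx, hy]; simp⟩
  have hker : ∀ w : LinearMap.ker bigP, π (w : P × (Fin n → R)).1 = 0 := by
    rintro ⟨⟨x, y⟩, hw⟩
    have h1 : s (π x) + (π' y : E) = 0 := hw
    have := congrArg r h1
    rwa [map_add, hr, hrπ', add_zero, map_zero] at this
  obtain ⟨l, hl⟩ := lift_inj k hs.1 (LinearMap.fst R P (Fin n → R) ∘ₗ (LinearMap.ker bigP).subtype)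
    (fun w => hs.exists_of (hker w))
  let i : K →ₗ[R] LinearMap.ker bigP := ((LinearMap.inl R P (Fin n → R)) ∘ₗ k).codRestrict _ (fun x => by
    show s (π (k x)) + (π' 0 : E) = 0
    rw [hs.comp_zero]; simp)
  refine (hE.syz h𝒴 h𝒵 bigP hbigPs).retract i l (fun x => hs.1 ?_)
  rw [hl]
  rfl

theorem XX.isResolving (h𝒴 : IsResolving R 𝒴) (h𝒵 : IsResolving R 𝒵) (hO : Orth 𝒴 𝒵) :
    IsResolving R {M : ModuleCat.{u} R | XX 𝒴 𝒵 M} where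
  fg M hM := XX.fin h𝒴 h𝒵 hM
  iso_closed M N := fun ⟨e⟩ hM => XX.retract hM e.symm.toLinearMap e.toLinearMap (by simp)
  proj_mem M h1 h2 := (DD.of_left h𝒴 (h𝒵.mproj M)).xx
  summand_closed M N h := XX.retract h (LinearMap.inl R M N) (LinearMap.fst R M N) (fun _ => rfl)
  ext_closed A B C f g hs hA hC := XX.ext h𝒴 h𝒵 hO hs hA hC
  syzygy_closed K P M f g hs _ _ _ hM := XX.syz h𝒴 h𝒵 hM hs

theorem part_one (hG : GorHyp R) (h𝒴 : IsResolving R 𝒴) (hZ𝒵 : 𝒵 ⊆ MCMcat R)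
    (h : XX 𝒴 𝒵 M) (hM : Mem (PDcat R) M) : Mem 𝒴 M := by
  obtain ⟨E, _, _, s, r, hr, Z, Y, _, _, _, _, f, g, hZ, hY, hs⟩ := h
  obtain ⟨n, v, hv, hEV⟩ := mcm_embed hG (hZ𝒵 hZ)
  obtain ⟨hMf, m, hm⟩ := hM
  obtain ⟨ρ, hρ⟩ := EV.extend (isSES_coker hv) (EV.of_pd hEV m _ hMf hm 0) (r ∘ₗ f)
  have hρ' : ∀ z, ρ (v z) = r (f z) := fun z => LinearMap.congr_fun hρ z
  let T : Submodule R ((Fin n → R) × E) := LinearMap.range (LinearMap.prod v (-f))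
  have hT : ∀ x e, (x, e) ∈ T ↔ ∃ z, v z = x ∧ -f z = e := fun x e => by
    constructor
    · rintro ⟨z, hz⟩
      exact ⟨z, congrArg Prod.fst hz, congrArg Prod.snd hz⟩
    · rintro ⟨z, rfl, rfl⟩
      exact ⟨z, rfl⟩
  let i : (Fin n → R) →ₗ[R] (((Fin n → R) × E) ⧸ T) := T.mkQ ∘ₗ LinearMap.inl R _ _
  let p : (((Fin n → R) × E) ⧸ T) →ₗ[R] Y := T.liftQ (g ∘ₗ LinearMap.snd R _ _) (by
    rintro ⟨x, e⟩ hx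
    obtain ⟨z, -, rfl⟩ := (hT x e).mp hx
    show g (-f z) = 0
    rw [map_neg, hs.comp_zero, neg_zero])
  have hsW : IsSES i p := by
    refine isSES_intro ?_ ?_ ?_ ?_
    · intro x hx
      have : ((x, 0) : (Fin n → R) × E) ∈ T := (Submodule.Quotient.mk_eq_zero T).mp hx
      obtain ⟨z, hz1, hz2⟩ := (hT _ _).mp this
      have hz : z = 0 := hs.1 (by rw [map_zero, ← neg_eq_zero]; exact hz2)
      rw [← hz1, hz]
      exact map_zero v
    · intro y
      obtain ⟨e, he⟩ := hs.2.1 y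
      exact ⟨T.mkQ (0, e), he⟩
    · intro x
      show g 0 = 0
      exact map_zero g
    · intro w hw
      obtain ⟨⟨x, e⟩, rfl⟩ := Submodule.Quotient.mk_surjective _ w
      obtain ⟨z, rfl⟩ := hs.exists_of (show g e = 0 from hw)
      refine ⟨x + v z, ?_⟩
      show (Submodule.Quotient.mk (x + v z, 0) : _ ⧸ T) = _
      rw [Submodule.Quotient.eq]
      exact (hT _ _).mpr ⟨z, by simp, by simp⟩
  have hW := h𝒴.mext hsW (h𝒴.mproj _) hY
  let r' : (((Fin n → R) × E) ⧸ T) →ₗ[R] M := T.liftQ (ρ.coprod r) (by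
    rintro ⟨x, e⟩ hx
    obtain ⟨z, rfl, rfl⟩ := (hT x e).mp hx
    show ρ (v z) + r (-f z) = 0
    rw [hρ', map_neg, add_neg_cancel])
  refine h𝒴.mretract (T.mkQ ∘ₗ LinearMap.inr R _ _ ∘ₗ s) r' (fun m => ?_) hW
  show ρ 0 + r (s m) = m
  rw [map_zero, zero_add, hr]

theorem part_two (hG : GorHyp R) (h𝒴 : IsResolving R 𝒴) (h𝒵 : IsResolving R 𝒵)
    (hY𝒴 : 𝒴 ⊆ PDcat R) (h : XX 𝒴 𝒵 M) (hM : Mem (MCMcat R) M) : Mem 𝒵 M := by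
  obtain ⟨E, _, _, s, r, hr, Z, Y, _, _, _, _, f, g, hZ, hY, hs⟩ := h
  have := h𝒴.mfin hY
  obtain ⟨n, q, hq⟩ := exists_cover R Y
  have hΩ := hY𝒴 (h𝒴.msyz (isSES_ker hq) hY)
  obtain ⟨hΩf, m, hm⟩ := hΩ
  obtain ⟨σ, hσ⟩ := EV.lift (isSES_ker hq)
    (EV.of_pd (fun i => mcm_EV hG hM i) m _ hΩf hm 0) (g ∘ₗ s)
  have hσ' : ∀ x, q (σ x) = g (s x) := fun x => LinearMap.congr_fun hσ x
  obtain ⟨φ, hφ⟩ := Module.projective_lifting_property g q hs.2.1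
  have hφ' : ∀ x, g (φ x) = q x := fun x => LinearMap.congr_fun hφ x
  obtain ⟨τ, hτ⟩ := lift_inj f hs.1 (s - φ ∘ₗ σ) (fun x => hs.exists_of (by
    show g (s x - φ (σ x)) = 0
    rw [map_sub, hφ', hσ', sub_self]))
  have hτ' : ∀ x, f (τ x) = s x - φ (σ x) := hτ
  have hZF : Mem 𝒵 (Z × (Fin n → R)) :=
    h𝒵.mext (f := LinearMap.inl R Z (Fin n → R)) (g := LinearMap.snd R Z (Fin n → R))
      ⟨LinearMap.inl_injective, LinearMap.snd_surjective, LinearMap.range_inl _ _ _⟩ hZ (h𝒵.mproj _)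
  refine h𝒵.mretract (τ.prod σ) (r ∘ₗ f.coprod φ) (fun x => ?_) hZF
  show r (f (τ x) + φ (σ x)) = x
  rw [hτ', sub_add_cancel, hr]

end Categorical
/-- Proposition 6.3: over a Gorenstein ring, resolving subcategories `𝒴 ⊆ PD(R)` and
`𝒵 ⊆ MCM(R)` are recovered from `res (𝒴 ∪ 𝒵)`. -/
theorem gorenstein_recover_parts [IsNoetherianRing R]
    (hGor : ∀ p : PrimeSpectrum R, ∃ n : ℕ,
      idLE (Localization.AtPrime p.asIdeal) n
        (ModuleCat.of (Localization.AtPrime p.asIdeal) (Localization.AtPrime p.asIdeal)))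
    (𝒴 𝒵 : Set (ModuleCat.{u} R))
    (h𝒴 : IsResolving R 𝒴) (hY : 𝒴 ⊆ PDcat R)
    (h𝒵 : IsResolving R 𝒵) (hZ : 𝒵 ⊆ MCMcat R) :
    𝒴 = resClosure R (𝒴 ∪ 𝒵) ∩ PDcat R ∧
    𝒵 = resClosure R (𝒴 ∪ 𝒵) ∩ MCMcat R := by
  have hO : Orth 𝒴 𝒵 := by
    intro Z Y _ _ _ _ hZm hYm
    obtain ⟨hYf, n, hn⟩ := hY hYm
    exact EV.of_pd (fun i => mcm_EV hGor (hZ hZm) i) n _ hYf hn 0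
  have hX := XX.isResolving h𝒴 h𝒵 hO
  have hsub : resClosure R (𝒴 ∪ 𝒵) ⊆ {M : ModuleCat.{u} R | XX 𝒴 𝒵 M} := by
    refine Set.sInter_subset_of_mem ⟨hX, ?_⟩
    rintro M (hM | hM)
    · exact (DD.of_right h𝒵 hM).xx
    · exact (DD.of_left h𝒴 hM).xx
  have hsup : 𝒴 ∪ 𝒵 ⊆ resClosure R (𝒴 ∪ 𝒵) := Set.subset_sInter fun 𝒳 h => h.2
  constructor
  · apply Set.Subset.antisymm
    · exact fun M hM => ⟨hsup (Or.inl hM), hY hM⟩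
    · exact fun M hM => part_one hGor h𝒴 hZ (hsub hM.1) hM.2
  · apply Set.Subset.antisymm
    · exact fun M hM => ⟨hsup (Or.inr hM), hZ hM⟩
    · exact fun M hM => part_two hGor h𝒴 h𝒵 hY (hsub hM.1) hM.2

end ResolvPaper
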